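/- arXiv:math/0311504 — 4 statements merged into one kernel-verified Lean document; each statement's English description precedes it below -/
import Mathlib

section
/- (Chen–Fox–Lyndon / Lyndon's theorem) Every nonempty word u in X* can be written as a product of Lyndon words u = l_1 l_2 ⋯ l_r with l_1 ≥ l_2 ≥ ⋯ ≥ l_r in the lexicographic order, and this factorization is unique (both the number r and the sequence (l_1, …, l_r) are uniquely determined by u). -/
/-- A word `u` is a Lyndon word if it is nonempty and lexicographically smaller than
each of its proper nonempty suffixes. -/
def IsLyndon {X : Type*} [LinearOrder X] (u : List X) : Prop :=
  u ≠ [] ∧ ∀ v w : List X, v ≠ [] → w ≠ [] → u = v ++ w → List.Lex (· < ·) u w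

/-- `ls` is a Lyndon factorization of `u`: all factors are Lyndon words, the factors are
(lexicographically) nonincreasing, and their concatenation is `u`. -/
def IsLyndonFactorization {X : Type*} [LinearOrder X] (ls : List (List X)) (u : List X) : Prop :=
  (∀ l ∈ ls, IsLyndon l) ∧ ls.Chain' (fun a b => ¬ List.Lex (· < ·) a b) ∧ ls.flatten = u

/-! The last factor of a Lyndon factorization of `u` is forced to be the least nonempty suffix of
`u`, so factorizations are built, and determined, by splitting off least nonempty suffixes.
Indeed `w` is the least nonempty suffix of `v ++ w` exactly when `w` is Lyndon and bounds all
nonempty suffixes of `v` from below: a suffix `l < w` would give the smaller suffix `l ++ w < w`.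
If `v` is already factorized, its least nonempty suffix is its last factor `l`, and the condition on
`v` becomes `w ≤ l`, the monotonicity required of a factorization. -/

section

variable {X : Type*} [LinearOrder X]

theorem isPrefix_or_append_lt_of_lt {u v : List X} (h : u < v) (w : List X) :
    u <+: v ∨ u ++ w < v := by
  induction h with
  | nil => exact .inl List.nil_prefix
  | rel hab => exact .inr (.rel hab)
  | cons _ ih => exact ih.imp (List.prefix_cons_inj _).2 .cons

theorem IsLyndon.append_lt {w : List X} (hw : IsLyndon w) {l : List X} (hl : l ≠ [])
    (h : l < w) : l ++ w < w := by
  rcases isPrefix_or_append_lt_of_lt h w with ⟨r, rfl⟩ | h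
  · have hr : r ≠ [] := by
      rintro rfl
      simp at h
    exact List.append_left_lt (hw.2 l r hl hr rfl)
  · exact h

/-- The nonempty suffixes of `u`, among them `u` itself if it is nonempty; the least of them splits
off as the last factor of the Lyndon factorization. -/
def nonemptySuffixes {α : Type*} (u : List α) : Set (List α) := {s | s ≠ [] ∧ s <:+ u}

theorem nonemptySuffixes_append {α : Type*} (v w : List α) :
    nonemptySuffixes (v ++ w) = nonemptySuffixes w ∪ (· ++ w) '' nonemptySuffixes v := by
  ext s
  constructor
  · rintro ⟨hs, p, hp⟩
    rcases List.append_eq_append_iff.1 hp with ⟨q, rfl, rfl⟩ | ⟨q, rfl, rfl⟩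
    · rcases eq_or_ne q [] with rfl | hq
      · exact .inl ⟨hs, List.suffix_rfl⟩
      · exact .inr ⟨q, ⟨hq, List.suffix_append _ _⟩, rfl⟩
    · exact .inl ⟨hs, List.suffix_append _ _⟩
  · rintro (⟨hs, hsw⟩ | ⟨q, ⟨hq, p, rfl⟩, rfl⟩)
    · exact ⟨hs, List.suffix_append_of_suffix hsw⟩
    · exact ⟨List.append_ne_nil_of_left_ne_nil hq w, p, by simp⟩

theorem finite_nonemptySuffixes {α : Type*} (u : List α) : (nonemptySuffixes u).Finite :=
  u.tails.finite_toSet.subset fun s hs => (List.mem_tails s u).2 hs.2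

theorem exists_isLeast_nonemptySuffixes {u : List X} (hu : u ≠ []) :
    ∃ w, IsLeast (nonemptySuffixes u) w := by
  obtain ⟨w, hw, hmin⟩ :=
    Set.exists_min_image _ id (finite_nonemptySuffixes u) ⟨u, hu, List.suffix_rfl⟩
  exact ⟨w, hw, hmin⟩

theorem isLyndon_iff_isLeast_nonemptySuffixes {u : List X} :
    IsLyndon u ↔ IsLeast (nonemptySuffixes u) u := by
  constructor
  · rintro ⟨hu, hlt⟩
    refine ⟨⟨hu, List.suffix_rfl⟩, ?_⟩
    rintro s ⟨hs, v, rfl⟩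
    rcases eq_or_ne v [] with rfl | hv
    · exact le_rfl
    · exact le_of_lt (hlt v s hv hs rfl)
  · rintro ⟨⟨hu, -⟩, hle⟩
    refine ⟨hu, ?_⟩
    rintro v w hv hw rfl
    exact (hle ⟨hw, List.suffix_append v w⟩).lt_of_ne (by simpa using hv)

theorem isLeast_nonemptySuffixes_append_iff {v w : List X} :
    IsLeast (nonemptySuffixes (v ++ w)) w ↔
      IsLyndon w ∧ w ∈ lowerBounds (nonemptySuffixes v) := by
  rw [nonemptySuffixes_append]
  constructor
  · rintro ⟨hmem, hle⟩
    have hw : IsLyndon w := by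
      have hne : w ≠ [] := by
        rcases hmem with h | ⟨q, hq, e⟩
        · exact h.1
        · exact absurd (by simpa using e) hq.1
      exact isLyndon_iff_isLeast_nonemptySuffixes.2
        ⟨⟨hne, List.suffix_rfl⟩, fun s hs => hle (.inl hs)⟩
    refine ⟨hw, fun s hs => ?_⟩
    by_contra! hlt
    exact (hw.append_lt hs.1 hlt).not_ge (hle (.inr ⟨s, hs, rfl⟩))
  · rintro ⟨hw, hle⟩
    obtain ⟨hmem, hmin⟩ := isLyndon_iff_isLeast_nonemptySuffixes.1 hw
    refine ⟨.inl hmem, ?_⟩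
    rintro _ (hs | ⟨q, hq, rfl⟩)
    · exact hmin hs
    · exact (hle hq).trans (not_lt.1 List.le_append_left)

namespace IsLyndonFactorization

theorem iff_isChain_ge {ls : List (List X)} {u : List X} :
    IsLyndonFactorization ls u ↔
      (∀ l ∈ ls, IsLyndon l) ∧ ls.IsChain (· ≥ ·) ∧ ls.flatten = u := by
  simp only [IsLyndonFactorization, List.lex_lt, not_lt]
  rfl

theorem nil_right_iff {ls : List (List X)} : IsLyndonFactorization ls [] ↔ ls = [] := by
  constructor
  · rintro ⟨hL, -, hflat⟩
    exact List.eq_nil_iff_forall_not_mem.2 fun l hl =>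
      (hL l hl).1 (List.flatten_eq_nil_iff.1 hflat l hl)
  · rintro rfl
    exact ⟨by simp, List.isChain_nil, rfl⟩

theorem append_singleton_iff_getLast? {ls : List (List X)} {v w : List X} :
    IsLyndonFactorization (ls ++ [w]) (v ++ w) ↔
      IsLyndonFactorization ls v ∧ IsLyndon w ∧ ∀ l ∈ ls.getLast?, w ≤ l := by
  simp only [iff_isChain_ge, List.isChain_append, List.forall_mem_append,
    List.forall_mem_singleton, List.isChain_singleton, List.flatten_append, List.flatten_singleton,
    List.append_cancel_right_eq, List.head?_singleton, Option.mem_some_iff, forall_eq',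
    true_and]
  tauto

theorem le_getLast?_iff_mem_lowerBounds {ls : List (List X)} {v w : List X}
    (h : IsLyndonFactorization ls v) :
    (∀ l ∈ ls.getLast?, w ≤ l) ↔ w ∈ lowerBounds (nonemptySuffixes v) := by
  induction ls using List.reverseRecOn generalizing v w with
  | nil =>
    obtain rfl : [] = v := h.2.2
    simp +contextual [nonemptySuffixes, lowerBounds]
  | append_singleton ls l ih =>
    obtain rfl : ls.flatten ++ l = v := by simpa using h.2.2
    obtain ⟨hls, hl, hlast⟩ := append_singleton_iff_getLast?.1 h
    have hleast : IsLeast (nonemptySuffixes (ls.flatten ++ l)) l :=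
      isLeast_nonemptySuffixes_append_iff.2 ⟨hl, (ih hls).1 hlast⟩
    simpa using le_isGLB_iff hleast.isGLB

theorem append_singleton_iff {ls : List (List X)} {v w : List X} :
    IsLyndonFactorization (ls ++ [w]) (v ++ w) ↔
      IsLyndonFactorization ls v ∧ IsLeast (nonemptySuffixes (v ++ w)) w := by
  rw [append_singleton_iff_getLast?, isLeast_nonemptySuffixes_append_iff]
  exact and_congr_right fun h => and_congr_right fun _ => h.le_getLast?_iff_mem_lowerBounds

end IsLyndonFactorization

theorem chen_fox_lyndon_general (u : List X) :
    ∃! ls : List (List X), IsLyndonFactorization ls u := by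
  induction hn : u.length using Nat.strong_induction_on generalizing u with
  | _ n ih =>
    subst hn
    rcases eq_or_ne u [] with rfl | hu
    · simp only [IsLyndonFactorization.nil_right_iff, existsUnique_eq]
    obtain ⟨w, hw⟩ := exists_isLeast_nonemptySuffixes hu
    obtain ⟨hne, v, rfl⟩ := hw.1
    have hlen : v.length < (v ++ w).length := by simpa using List.length_pos_iff.2 hne
    obtain ⟨ls, hls, huniq⟩ := ih _ hlen v rfl
    refine ⟨ls ++ [w], IsLyndonFactorization.append_singleton_iff.2 ⟨hls, hw⟩, fun ms hms => ?_⟩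
    rcases List.eq_nil_or_concat' ms with rfl | ⟨ms, w', rfl⟩
    · exact absurd hms.2.2.symm hu
    have hflat : ms.flatten ++ w' = v ++ w := by simpa using hms.2.2
    rw [← hflat] at hms hw
    obtain ⟨hms', hw'⟩ := IsLyndonFactorization.append_singleton_iff.1 hms
    obtain rfl : w' = w := hw'.unique hw
    obtain rfl : ms.flatten = v := List.append_cancel_right hflat
    rw [huniq ms hms']

end

/-- Chen–Fox–Lyndon theorem: every nonempty word can be written uniquely as a
nonincreasing product of Lyndon words. -/
theorem chen_fox_lyndon {X : Type*} [Fintype X] [LinearOrder X] (u : List X) (hu : u ≠ []) :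
    ∃! ls : List (List X), IsLyndonFactorization ls u :=
  chen_fox_lyndon_general u
end

section
/- (Comparison via Lyndon letters) Let u and v be nonempty words with Lyndon decompositions u = l_1 l_2 ⋯ l_r and v = m_1 m_2 ⋯ m_s. Then u < v in the lexicographic order on X* if and only if the sequence (l_1, …, l_r) is smaller than (m_1, …, m_s) in the lexicographic order on finite sequences of words induced by the lexicographic order on X*; that is, if and only if either r < s and l_i = m_i for all 1 ≤ i ≤ r, or there exists an index i with l_j = m_j for all j < i and l_i < m_i lexicographically. -/
/-! Concatenation is strictly increasing on nonincreasing sequences of Lyndon words, and these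
sequences are linearly ordered, so it also reflects the order. For the monotonicity, let `m` be the
Lyndon letter of the larger sequence at the first index where the two differ; all remaining letters
of the smaller sequence are `< m`. Their concatenation stays below `m`: each time a letter matches a
prefix of what is left of `m`, the new remainder is a suffix of `m`, hence `≥ m` and so again larger
than every letter still to come. -/

theorem exists_eq_append_or_lex_append_append {α : Type*} {r : α → α → Prop} {u v : List α}
    (h : List.Lex r u v) :
    (∃ w ≠ [], v = u ++ w) ∨ ∀ s t : List α, List.Lex r (u ++ s) (v ++ t) := by
  induction h with
  | @nil a v => exact .inl ⟨a :: v, List.cons_ne_nil a v, rfl⟩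
  | cons _ ih =>
    rcases ih with ⟨w, hw, rfl⟩ | ih
    · exact .inl ⟨w, hw, rfl⟩
    · exact .inr fun s t => .cons (ih s t)
  | rel hab => exact .inr fun _ _ => .rel hab

section Lyndon

variable {X : Type*} [LinearOrder X]

theorem IsLyndon.le_of_isSuffix {m w : List X} (hm : IsLyndon m) (hw : w ≠ []) (hwm : w <:+ m) :
    m ≤ w := by
  obtain ⟨p, rfl⟩ := hwm
  rcases eq_or_ne p [] with rfl | hp
  · exact le_rfl
  · exact le_of_lt (hm.2 p w hp hw rfl)

theorem IsLyndon.flatten_lt_of_isSuffix {m : List X} (hm : IsLyndon m) {ls : List (List X)}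
    (hls : ∀ l ∈ ls, l < m) {w : List X} (hw : w ≠ []) (hwm : w <:+ m) : ls.flatten < w := by
  induction ls generalizing w with
  | nil => exact (List.lex_nil_or_eq_nil w).resolve_right hw
  | cons l ls ih =>
    rw [List.forall_mem_cons] at hls
    have hlw : l < w := hls.1.trans_le (hm.le_of_isSuffix hw hwm)
    rw [List.flatten_cons]
    rcases exists_eq_append_or_lex_append_append hlw with ⟨w', hw', rfl⟩ | hlt
    · exact List.append_left_lt (ih hls.2 hw' ((List.suffix_append l w').trans hwm))
    · simpa only [List.append_nil, List.lex_lt] using hlt ls.flatten []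

theorem IsLyndon.flatten_lt {m : List X} (hm : IsLyndon m) {ls : List (List X)}
    (hls : ∀ l ∈ ls, l < m) : ls.flatten < m :=
  hm.flatten_lt_of_isSuffix hls hm.1 List.suffix_rfl

theorem flatten_lt_flatten_of_forall_isLyndon {ls ms : List (List X)} (hls : ls.IsChain (· ≥ ·))
    (hms : ∀ m ∈ ms, IsLyndon m) (h : ls < ms) : ls.flatten < ms.flatten := by
  induction h with
  | @nil m ms =>
    have hne : (m :: ms).flatten ≠ [] :=
      List.flatten_ne_nil_iff.2 ⟨m, List.mem_cons_self, (hms m List.mem_cons_self).1⟩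
    exact (List.lex_nil_or_eq_nil _).resolve_right hne
  | cons _ ih => exact List.append_left_lt (ih hls.tail (List.forall_mem_cons.1 hms).2)
  | @rel l ls m ms hlm =>
    have hlt : ∀ x ∈ l :: ls, x < m :=
      List.forall_mem_cons.2 ⟨hlm, fun _ hx => (hls.rel_cons hx).trans_lt hlm⟩
    exact List.Lex.append_right _ _ ((hms m List.mem_cons_self).flatten_lt hlt)

theorem strictMonoOn_flatten_isLyndonFactorization :
    StrictMonoOn List.flatten {ls : List (List X) | IsLyndonFactorization ls ls.flatten} :=
  fun _ hls _ hms h =>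
    flatten_lt_flatten_of_forall_isLyndon (hls.2.1.imp fun _ _ => not_lt.1) hms.1 h

theorem lex_iff_lex_lyndon_letters_general {u v : List X} {ls ms : List (List X)}
    (hls : IsLyndonFactorization ls u) (hms : IsLyndonFactorization ms v) :
    u < v ↔ ls < ms := by
  obtain rfl := hls.2.2
  obtain rfl := hms.2.2
  exact strictMonoOn_flatten_isLyndonFactorization.lt_iff_lt hls hms

end Lyndon

/-- Comparison of two words in the lexicographic order is equivalent to the comparison
of the sequences of their Lyndon letters, in the lexicographic order on finite sequences
of words induced by the lexicographic order on words. -/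
theorem lex_iff_lex_lyndon_letters {X : Type*} [Fintype X] [LinearOrder X]
    (u v : List X) (hu : u ≠ []) (hv : v ≠ [])
    (ls ms : List (List X))
    (hls : IsLyndonFactorization ls u) (hms : IsLyndonFactorization ms v) :
    List.Lex (· < ·) u v ↔
      List.Lex (fun a b : List X => List.Lex (· < ·) a b) ls ms :=
  lex_iff_lex_lyndon_letters_general hls hms
end

section
/- Let u be a Lyndon word and v a nonempty word. Then v ≫ u if and only if v > u^i in the lexicographic order for every positive integer i. -/
/-- `v ≫ u` : the first Lyndon letter of the Lyndon decomposition of `v` is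
lexicographically greater than `u`. -/
def MuchGt {X : Type*} [LinearOrder X] (v u : List X) : Prop :=
  ∃ (l : List X) (t : List (List X)),
    IsLyndonFactorization (l :: t) v ∧ List.Lex (· < ·) u l

/-!
Write `w ^ i` for `(List.replicate i w).flatten`.

Suppose that the first Lyndon letter `l` of `v` exceeds `u`. If `u` and `l` disagree at some
position, then `u ^ i` and `v` disagree there in the same way. Otherwise `l = u ++ c`, and `l ≤ c`
because `l` is Lyndon, so `u ^ i < l` implies `u ^ (i + 1) < u ++ c = l`.

Conversely, if the first Lyndon letter is at most `u`, then all of them are, and replacing each of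
them by `u` does not decrease the word. The delicate case is that of a letter `l` with `u = l ++ c`
followed by a word `w ≤ u ^ n`. Here `u ≤ c` and `c` is at most as long as `u`, so appending a
common word preserves the inequality, and
`l ++ w ≤ l ++ u ^ (n + 1) = l ++ (u ++ u ^ n) ≤ l ++ (c ++ u ^ n) = u ^ (n + 1)`.
-/

section Lex

variable {α : Type*}

lemma exists_eq_append_or_append_lt_append [LT α] {a b : List α} (h : a < b) :
    (∃ c, c ≠ [] ∧ b = a ++ c) ∨ ∀ x y, a ++ x < b ++ y := by
  induction h with
  | @nil c s => exact .inl ⟨c :: s, List.cons_ne_nil c s, rfl⟩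
  | rel h => exact .inr fun _ _ => .rel h
  | cons _ ih =>
    rcases ih with ⟨c, hc, rfl⟩ | hlt
    · exact .inl ⟨c, hc, rfl⟩
    · exact .inr fun x y => .cons (hlt x y)

lemma append_lt_append_of_length_le [LT α] {a b : List α} (h : a < b)
    (hlen : b.length ≤ a.length) (x y : List α) : a ++ x < b ++ y := by
  rcases exists_eq_append_or_append_lt_append h with ⟨c, hc, rfl⟩ | hlt
  · have := List.length_pos_iff.2 hc
    rw [List.length_append] at hlen
    omega
  · exact hlt x y

variable [LinearOrder α]

lemma append_le_append_right_of_length_le {a b : List α} (h : a ≤ b)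
    (hlen : b.length ≤ a.length) (x : List α) : a ++ x ≤ b ++ x := by
  rcases h.eq_or_lt with rfl | hlt
  · exact le_rfl
  · exact (append_lt_append_of_length_le hlt hlen x x).le

lemma strictMono_append_left (s : List α) : StrictMono (s ++ ·) :=
  fun _ _ => List.append_left_lt

lemma le_append_self (a b : List α) : a ≤ a ++ b :=
  not_lt.1 List.le_append_left

lemma flatten_replicate_le_append (n : ℕ) (u : List α) :
    (List.replicate n u).flatten ≤ u ++ (List.replicate n u).flatten := by
  rw [← List.flatten_cons, ← List.replicate_succ, List.replicate_succ', List.flatten_concat]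
  exact le_append_self _ u

end Lex

section Lyndon

variable {X : Type*} [LinearOrder X]

lemma isLyndon_singleton (x : X) : IsLyndon [x] :=
  ⟨List.cons_ne_nil x [], by simp +contextual [List.singleton_eq_append_iff]⟩

namespace IsLyndon

lemma append_lt_right {p s : List X} (h : IsLyndon (p ++ s)) (hp : p ≠ []) (hs : s ≠ []) :
    p ++ s < s :=
  h.2 p s hp hs rfl

lemma append_le_right {p s : List X} (h : IsLyndon (p ++ s)) (hs : s ≠ []) : p ++ s ≤ s := by
  rcases eq_or_ne p [] with rfl | hp
  · rfl
  · exact (h.append_lt_right hp hs).le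

lemma append_lt_of_lt {a b : List X} (hb : IsLyndon b) (ha : a ≠ []) (h : a < b) :
    a ++ b < b := by
  rcases exists_eq_append_or_append_lt_append h with ⟨c, hc, rfl⟩ | hlt
  · exact strictMono_append_left a (hb.append_lt_right ha hc)
  · simpa using hlt b []

lemma append {a b : List X} (ha : IsLyndon a) (hb : IsLyndon b) (h : a < b) :
    IsLyndon (a ++ b) := by
  have hab : a ++ b < b := hb.append_lt_of_lt ha.1 h
  refine ⟨List.append_ne_nil_of_left_ne_nil ha.1 b, fun p s hp hs hps => ?_⟩
  rcases List.append_eq_append_iff.1 hps with ⟨c, rfl, rfl⟩ | ⟨c, rfl, rfl⟩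
  · exact hab.trans_le (hb.append_le_right hs)
  · rcases eq_or_ne c [] with rfl | hc
    · simpa using hab
    · exact append_lt_append_of_length_le (ha.append_lt_right hp hc) (by simp) b b

lemma flatten_replicate_lt {l u : List X} (hl : IsLyndon l) (h : u < l) (i : ℕ) :
    (List.replicate i u).flatten < l := by
  induction i with
  | zero => exact (le_append_self [] u).trans_lt h
  | succ i ih =>
    rw [List.replicate_succ, List.flatten_cons]
    rcases exists_eq_append_or_append_lt_append h with ⟨c, hc, rfl⟩ | hlt
    · exact strictMono_append_left u (ih.trans_le (hl.append_le_right hc))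
    · simpa using hlt (List.replicate i u).flatten []

lemma append_le_append {u l w x : List X} (hu : IsLyndon u) (hl : l ≤ u) (hw : w ≤ x)
    (hx : x ≤ u ++ x) : l ++ w ≤ u ++ x := by
  rcases hl.eq_or_lt with rfl | hlt
  · exact (strictMono_append_left l).monotone hw
  rcases exists_eq_append_or_append_lt_append hlt with ⟨c, hc, rfl⟩ | hlt
  · have hcx : l ++ c ++ x ≤ c ++ x :=
      append_le_append_right_of_length_le (hu.append_le_right hc) (by simp) x
    calc
      l ++ w ≤ l ++ (c ++ x) := (strictMono_append_left l).monotone (hw.trans (hx.trans hcx))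
      _ = l ++ c ++ x := (List.append_assoc l c x).symm
  · exact (hlt w x).le

lemma flatten_le_flatten_replicate {u : List X} (hu : IsLyndon u) {ls : List (List X)}
    (h : ∀ l ∈ ls, l ≤ u) : ls.flatten ≤ (List.replicate ls.length u).flatten := by
  induction ls with
  | nil => exact le_rfl
  | cons l t ih =>
    obtain ⟨hl, ht⟩ := List.forall_mem_cons.1 h
    exact hu.append_le_append hl (ih ht) (flatten_replicate_le_append t.length u)

lemma exists_isLyndonFactorization_append {a w : List X} {ls : List (List X)} (ha : IsLyndon a)
    (h : IsLyndonFactorization ls w) : ∃ ls', IsLyndonFactorization ls' (a ++ w) := by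
  induction ls generalizing a w with
  | nil =>
    obtain ⟨-, -, rfl⟩ := h
    exact ⟨[a], List.forall_mem_singleton.2 ha, List.isChain_singleton a, rfl⟩
  | cons l t ih =>
    obtain ⟨hLyndon, hchain, rfl⟩ := h
    by_cases hal : a < l
    · obtain ⟨hl, ht⟩ := List.forall_mem_cons.1 hLyndon
      obtain ⟨ls', hls'⟩ := ih (ha.append hl hal) ⟨ht, hchain.tail, rfl⟩
      exact ⟨ls', by rwa [List.flatten_cons, ← List.append_assoc]⟩
    · exact ⟨a :: l :: t, List.forall_mem_cons.2 ⟨ha, hLyndon⟩,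
        List.isChain_cons_cons.2 ⟨hal, hchain⟩, rfl⟩

end IsLyndon

lemma exists_isLyndonFactorization (v : List X) : ∃ ls, IsLyndonFactorization ls v := by
  induction v with
  | nil => exact ⟨[], List.forall_mem_nil _, List.isChain_nil, rfl⟩
  | cons x v ih =>
    obtain ⟨ls, h⟩ := ih
    exact (isLyndon_singleton x).exists_isLyndonFactorization_append h

lemma IsLyndonFactorization.le_head {l v : List X} {t : List (List X)}
    (h : IsLyndonFactorization (l :: t) v) : ∀ m ∈ l :: t, m ≤ l := by
  have hchain : (l :: t).IsChain (· ≥ ·) := h.2.1.imp fun _ _ => not_lt.1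
  exact List.forall_mem_cons.2 ⟨le_rfl, (List.pairwise_cons.1 hchain.pairwise).1⟩

lemma MuchGt.flatten_replicate_lt {u v : List X} (h : MuchGt v u) (i : ℕ) :
    (List.replicate i u).flatten < v := by
  obtain ⟨l, t, ⟨hLyndon, -, rfl⟩, hul⟩ := h
  have hl : IsLyndon l := hLyndon l List.mem_cons_self
  exact (hl.flatten_replicate_lt hul i).trans_le (le_append_self l t.flatten)

lemma IsLyndon.muchGt_of_forall_flatten_replicate_lt {u v : List X} (hu : IsLyndon u)
    (h : ∀ i : ℕ, 0 < i → (List.replicate i u).flatten < v) : MuchGt v u := by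
  obtain ⟨ls, hls⟩ := exists_isLyndonFactorization v
  cases ls with
  | nil =>
    obtain ⟨-, -, rfl⟩ := hls
    exact absurd (h 1 one_pos) (List.not_lt_nil _)
  | cons l t =>
    have hul : u < l := by
      by_contra! hlu
      have hle : (l :: t).flatten ≤ (List.replicate (t.length + 1) u).flatten :=
        hu.flatten_le_flatten_replicate fun m hm => (hls.le_head m hm).trans hlu
      rw [hls.2.2] at hle
      exact hle.not_gt (h _ t.length.succ_pos)
    exact ⟨l, t, hls, hul⟩

theorem muchGt_iff_gt_pow_general {u : List X} (hu : IsLyndon u) (v : List X) :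
    MuchGt v u ↔ ∀ i : ℕ, 0 < i → (List.replicate i u).flatten < v :=
  ⟨fun h i _ => h.flatten_replicate_lt i, hu.muchGt_of_forall_flatten_replicate_lt⟩

end Lyndon

/-- For a Lyndon word `u` and a nonempty word `v`, `v ≫ u` holds iff `v` is
lexicographically greater than every power `u^i`, `i ≥ 1`. -/
theorem muchGt_iff_gt_pow {X : Type*} [Fintype X] [LinearOrder X]
    (u v : List X) (hu : IsLyndon u) (hv : v ≠ []) :
    MuchGt v u ↔
      ∀ i : ℕ, 0 < i → List.Lex (· < ·) (List.replicate i u).flatten v :=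
  muchGt_iff_gt_pow_general hu v
end

section
/- Let c be a k-linear endomorphism of V⊗V that is left triangular with respect to X, with diagonal coefficients γ_{x,y}. Then for all words u of length n and v of length m in letters from X: c_{n,m}(u⊗v) − γ_{u,v}·(v⊗u) lies in the subspace k{z : z a word of length m with z > v lexicographically} ⊗ V^{⊗n} of V^{⊗m} ⊗ V^{⊗n}. (In other words, c_{n,m}(u⊗v) ∈ d(u⊗v) + kX^{m}_{>v} ⊗ kX^{n}, where d is the diagonal component of c.) -/
/-!
We identify the finite-dimensional vector space `V` with basis `X` with the free
`k`-module on `X`, and the tensor power `V^{⊗n}` with the free `k`-module on the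
words of length `n` in letters from `X`; correspondingly `V^{⊗n} ⊗ V^{⊗m}` is the
free `k`-module on pairs of words.  A linear endomorphism `c` of `V ⊗ V` is encoded
by its matrix `c : X → X → ((X × X) →₀ k)`, via `c(x ⊗ y) = Σ_{(z,w)} c x y (z,w) • z ⊗ w`.
-/

variable {k : Type*} [Field k] {X : Type*} [Fintype X] [LinearOrder X]

/-- The maps `c_{1,m} : V ⊗ V^{⊗m} → V^{⊗m} ⊗ V`, defined on basis vectors by
`c_{1,0} = id` and `c_{1,m+1} = (id_V ⊗ c_{1,m}) ∘ (c ⊗ id_{V^{⊗m}})`. -/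
noncomputable def braidOne (c : X → X → ((X × X) →₀ k)) :
    X → List X → ((List X × List X) →₀ k)
  | x, [] => Finsupp.single ([], [x]) 1
  | x, y :: v =>
      (c x y).sum fun p a =>
        a • Finsupp.mapDomain (fun q : List X × List X => (p.1 :: q.1, q.2))
          (braidOne c p.2 v)

/-- Auxiliary version of `c_{n,m}` where the first word is given reversed:
`c_{0,m} = id` and `c_{n+1,m} = (c_{n,m} ⊗ id_V) ∘ (id_{V^{⊗n}} ⊗ c_{1,m})`. -/
noncomputable def braidRev (c : X → X → ((X × X) →₀ k)) :
    List X → List X → ((List X × List X) →₀ k)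
  | [], v => Finsupp.single (v, []) 1
  | x :: urev, v =>
      (braidOne c x v).sum fun p a =>
        a • Finsupp.mapDomain (fun q : List X × List X => (q.1, q.2 ++ p.2))
          (braidRev c urev p.1)

/-- The braiding maps `c_{n,m} : V^{⊗n} ⊗ V^{⊗m} → V^{⊗m} ⊗ V^{⊗n}` on basis vectors:
`braidWords c u v` is `c_{l(u),l(v)}(u ⊗ v)`. -/
noncomputable def braidWords (c : X → X → ((X × X) →₀ k)) (u v : List X) :
    (List X × List X) →₀ k :=
  braidRev c u.reverse v

/-- `c` is left triangular with respect to the ordered basis `X`: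
`c(x ⊗ y) = γ_{x,y} • y ⊗ x + Σ_{z > y} z ⊗ v_{x,y,z}`, i.e. the coefficient of
`c(x ⊗ y)` at `z ⊗ w` vanishes unless `(z, w) = (y, x)` or `z > y`. -/
def LeftTriangularMat (c : X → X → ((X × X) →₀ k)) : Prop :=
  ∀ (x y : X) (zw : X × X), c x y zw ≠ 0 → (zw.1 = y ∧ zw.2 = x) ∨ y < zw.1

/-- `c ⊗ id` acting on `V ⊗ V ⊗ V` (matrix form). -/
noncomputable def act12 (c : X → X → ((X × X) →₀ k)) (f : (X × X × X) →₀ k) :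
    (X × X × X) →₀ k :=
  f.sum fun t a => a • ((c t.1 t.2.1).sum fun p b => Finsupp.single (p.1, p.2, t.2.2) b)

/-- `id ⊗ c` acting on `V ⊗ V ⊗ V` (matrix form). -/
noncomputable def act23 (c : X → X → ((X × X) →₀ k)) (f : (X × X × X) →₀ k) :
    (X × X × X) →₀ k :=
  f.sum fun t a => a • ((c t.2.1 t.2.2).sum fun p b => Finsupp.single (t.1, p.1, p.2) b)

/-- `c` satisfies the braid equation
`(c ⊗ id)(id ⊗ c)(c ⊗ id) = (id ⊗ c)(c ⊗ id)(id ⊗ c)`. -/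
def SatisfiesBraidEq (c : X → X → ((X × X) →₀ k)) : Prop :=
  ∀ f : (X × X × X) →₀ k,
    act12 c (act23 c (act12 c f)) = act23 c (act12 c (act23 c f))

/-- The linear extension of `c` to an endomorphism of `V ⊗ V`. -/
noncomputable def extendMat (c : X → X → ((X × X) →₀ k)) (f : (X × X) →₀ k) :
    (X × X) →₀ k :=
  f.sum fun p a => a • c p.1 p.2

/-- The coefficient `γ_{u,v} = Π_{x ∈ u} Π_{y ∈ v} γ x y`. -/
def gammaWords (γ : X → X → k) (u v : List X) : k :=
  (u.map fun x => (v.map fun y => γ x y).prod).prod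

/-!
The recursions for `c_{1,m}` and for `c_{n+1,m}` both apply a map to the result of another one, so
the point is to follow the leading term.  Putting a letter `z > y` in front of any word of length
`l(v)` gives a word above `yv`; putting the same letter in front of `v` and of a word above `v`
preserves their order; and a word above a word above `v` is above `v`.  Hence a term which has left
the diagonal never returns to it, and the diagonal coefficients multiply.
-/

section LeadingTerm

variable {R P Q : Type*} [Ring R]

/-- `f ∈ a • p₀ + R T`: the element `f` of the free module on `P` has leading term `a • p₀` modulo
the span of the basis vectors in `T`.  The coefficient `a` may be zero, and `p₀` may lie in `T`. -/
def HasLeadingTerm (f : P →₀ R) (a : R) (p₀ : P) (T : Set P) : Prop :=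
  f - a • Finsupp.single p₀ 1 ∈ Finsupp.supported R R T

namespace HasLeadingTerm

variable {f : P →₀ R} {a : R} {p₀ : P} {T : Set P} {S : Set Q}

theorem single_one (p₀ : P) (T : Set P) :
    HasLeadingTerm (Finsupp.single p₀ (1 : R)) 1 p₀ T := by
  simp [HasLeadingTerm]

theorem mem_supported (hf : HasLeadingTerm f a p₀ T) (hp₀ : p₀ ∈ T) :
    f ∈ Finsupp.supported R R T :=
  (Submodule.sub_mem_iff_left _
    (Submodule.smul_mem _ a (Finsupp.single_mem_supported R 1 hp₀))).1 hf

theorem mapDomain {φ : P → Q} (hf : HasLeadingTerm f a p₀ T) (hφ : Set.MapsTo φ T S) :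
    HasLeadingTerm (Finsupp.mapDomain φ f) a (φ p₀) S := by
  have himage : Finsupp.lmapDomain R R φ (f - a • Finsupp.single p₀ 1) ∈
      Finsupp.supported R R S :=
    Finsupp.supported_comap_lmapDomain R R φ S (Finsupp.supported_mono hφ hf)
  rwa [map_sub, map_smul, Finsupp.lmapDomain_apply, Finsupp.lmapDomain_apply,
    Finsupp.mapDomain_single] at himage

theorem sum_smul {g : P → Q →₀ R} {b : R} {q₀ : Q} (hf : HasLeadingTerm f a p₀ T)
    (hp₀ : HasLeadingTerm (g p₀) b q₀ S) (hT : ∀ p ∈ T, g p ∈ Finsupp.supported R R S) :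
    HasLeadingTerm (f.sum fun p r => r • g p) (a * b) q₀ S := by
  have htail : Finsupp.linearCombination R g (f - a • Finsupp.single p₀ 1) ∈
      Finsupp.supported R R S :=
    Submodule.span_le.2 (Set.image_subset_iff.2 hT)
      (Finsupp.mem_span_image_iff_linearCombination R |>.2 ⟨_, hf, rfl⟩)
  have hsum := add_mem htail (Submodule.smul_mem _ a hp₀)
  rwa [map_sub, map_smul, Finsupp.linearCombination_single, one_smul, smul_sub, smul_smul,
    sub_add_sub_cancel, Finsupp.linearCombination_apply] at hsum

end HasLeadingTerm

end LeadingTerm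

section Words

omit [Fintype X]

/-- The pairs of words `(z, w)` with `l(z) = l(v)`, `z > v` and `l(w) = n`, indexing a basis of
`k X^{l(v)}_{> v} ⊗ k X^n`. -/
def upperPairs (v : List X) (n : ℕ) : Set (List X × List X) :=
  {p | p.1.length = v.length ∧ List.Lex (· < ·) v p.1 ∧ p.2.length = n}

theorem cons_mem_upperPairs_of_lt {y z : X} {v t w : List X} (hyz : y < z)
    (ht : t.length = v.length) : (z :: t, w) ∈ upperPairs (y :: v) w.length :=
  ⟨by simp [ht], List.Lex.rel hyz, rfl⟩

theorem mapsTo_cons_upperPairs (y : X) (v : List X) (n : ℕ) :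
    Set.MapsTo (fun p => (y :: p.1, p.2)) (upperPairs v n) (upperPairs (y :: v) n) :=
  fun _ hp => ⟨by simp [hp.1], List.Lex.cons hp.2.1, hp.2.2⟩

theorem mapsTo_cons_upperPairs_of_lt {y z : X} (hyz : y < z) (v : List X) (n : ℕ) :
    Set.MapsTo (fun p => (z :: p.1, p.2)) (upperPairs v n) (upperPairs (y :: v) n) := by
  rintro p ⟨hlen, -, rfl⟩
  exact cons_mem_upperPairs_of_lt hyz hlen

theorem mapsTo_append_upperPairs (v w : List X) (n : ℕ) :
    Set.MapsTo (fun p => (p.1, p.2 ++ w)) (upperPairs v n) (upperPairs v (n + w.length)) :=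
  fun _ hp => ⟨hp.1, hp.2.1, by simp [hp.2.2]⟩

theorem upperPairs_subset_of_mem {v : List X} {m : ℕ} {p : List X × List X}
    (hp : p ∈ upperPairs v m) (n : ℕ) : upperPairs p.1 n ⊆ upperPairs v n :=
  fun _ hq => ⟨hq.1.trans hp.1, List.lt_trans (α := X) hp.2.1 hq.2.1, hq.2.2⟩

end Words

section Recursion

omit [Fintype X] [LinearOrder X]

/-- The coefficients `γ_{x,y}` of the diagonal component of `c`. -/
def diagCoeff (c : X → X → ((X × X) →₀ k)) (x y : X) : k :=
  c x y (y, x)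

theorem gammaWords_concat (γ : X → X → k) (u v : List X) (x : X) :
    gammaWords γ (u ++ [x]) v = (v.map (γ x)).prod * gammaWords γ u v := by
  simp [gammaWords, mul_comm]

theorem braidWords_concat (c : X → X → ((X × X) →₀ k)) (u v : List X) (x : X) :
    braidWords c (u ++ [x]) v = (braidOne c x v).sum fun p a =>
      a • Finsupp.mapDomain (fun q => (q.1, q.2 ++ p.2)) (braidWords c u p.1) := by
  rw [braidWords, List.reverse_concat, braidRev]
  rfl

end Recursion

section Triangular

omit [Fintype X]

variable {c : X → X → ((X × X) →₀ k)}

theorem LeftTriangularMat.hasLeadingTerm (hc : LeftTriangularMat c) (x y : X) :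
    HasLeadingTerm (c x y) (diagCoeff c x y) (y, x) {p | y < p.1} := by
  refine (Finsupp.mem_supported' _ _).2 fun p hp => ?_
  by_cases hdiag : p = (y, x)
  · simp [hdiag, diagCoeff]
  · have hzero : c x y p = 0 := by
      by_contra hne
      exact (hc x y p hne).elim (fun h => hdiag (Prod.ext h.1 h.2)) hp
    simp [hzero, Finsupp.single_eq_of_ne hdiag]

theorem LeftTriangularMat.braidOne_hasLeadingTerm (hc : LeftTriangularMat c) (x : X)
    (v : List X) :
    HasLeadingTerm (braidOne c x v) (v.map (diagCoeff c x)).prod (v, [x]) (upperPairs v 1) := by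
  induction v generalizing x with
  | nil => exact HasLeadingTerm.single_one _ _
  | cons y v ih =>
    rw [braidOne, List.map_cons, List.prod_cons]
    refine (hc.hasLeadingTerm x y).sum_smul ((ih x).mapDomain (mapsTo_cons_upperPairs y v 1))
      fun p hp => ?_
    exact ((ih p.2).mapDomain (mapsTo_cons_upperPairs_of_lt hp v 1)).mem_supported
      (cons_mem_upperPairs_of_lt hp rfl)

theorem LeftTriangularMat.braidWords_hasLeadingTerm (hc : LeftTriangularMat c) (u v : List X) :
    HasLeadingTerm (braidWords c u v) (gammaWords (diagCoeff c) u v) (v, u)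
      (upperPairs v u.length) := by
  induction u using List.reverseRecOn generalizing v with
  | nil => exact HasLeadingTerm.single_one _ _
  | append_singleton u x ih =>
    rw [braidWords_concat, gammaWords_concat, List.length_append]
    refine (hc.braidOne_hasLeadingTerm x v).sum_smul
      ((ih v).mapDomain (mapsTo_append_upperPairs v [x] u.length)) fun p hp => ?_
    have hlen : p.2.length = [x].length := hp.2.2
    rw [← hlen]
    refine ((ih p.1).mapDomain <| (mapsTo_append_upperPairs v p.2 u.length).mono_left
      (upperPairs_subset_of_mem hp u.length)).mem_supported ?_
    exact ⟨hp.1, hp.2.1, List.length_append⟩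

theorem braidWords_triangular_general
    (c : X → X → ((X × X) →₀ k)) (γ : X → X → k)
    (hγ : ∀ x y : X, γ x y = c x y (y, x))
    (htri : LeftTriangularMat c)
    (u v : List X) :
    braidWords c u v - gammaWords γ u v • Finsupp.single (v, u) 1 ∈
      Submodule.span k {f : (List X × List X) →₀ k |
        ∃ z w : List X, z.length = v.length ∧ List.Lex (· < ·) v z ∧
          w.length = u.length ∧ f = Finsupp.single (z, w) 1} := by
  obtain rfl : γ = diagCoeff c := funext₂ hγ
  have hlead := htri.braidWords_hasLeadingTerm u v
  rw [HasLeadingTerm, Finsupp.supported_eq_span_single] at hlead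
  refine Submodule.span_mono ?_ hlead
  rintro _ ⟨⟨z, w⟩, ⟨hz, hlex, hw⟩, rfl⟩
  exact ⟨z, w, hz, hlex, hw, rfl⟩

end Triangular

/-- If `c` is left triangular with respect to `X` with diagonal coefficients `γ`, then
for all words `u, v`:
`c_{l(u),l(v)}(u ⊗ v) ∈ γ_{u,v} • (v ⊗ u) + k X^{l(v)}_{> v} ⊗ k X^{l(u)}`. -/
theorem braidWords_triangular
    (c : X → X → ((X × X) →₀ k)) (γ : X → X → k)
    (hγ : ∀ x y : X, γ x y = c x y (y, x))
    (htri : LeftTriangularMat c)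
    (u v : List X) :
    braidWords c u v - gammaWords γ u v • Finsupp.single (v, u) 1 ∈
      Submodule.span k {f : (List X × List X) →₀ k |
        ∃ z w : List X, z.length = v.length ∧ List.Lex (· < ·) v z ∧
          w.length = u.length ∧ f = Finsupp.single (z, w) 1} :=
  braidWords_triangular_general c γ hγ htri u v
end
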